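/- Let 0 < δ < 1 and 0 < p ≤ q < ∞. Suppose the fractional (δ,q,p)-Hardy inequality holds in a proper open set G in ℝⁿ with constant C₁ > 0. Then there is a constant N = N(C₁, n, δ, q, p) > 0 such that, for any Whitney decomposition 𝒲(G) of G, the inequality ∑_{Q ∈ 𝒲(G)} cap_{δ,p}(K ∩ Q, G)^{q/p} ≤ N^{q/p} · cap_{δ,p}(K, G)^{q/p} holds for every compact set K in G. -/

import Mathlib

open MeasureTheory Metric Set
open scoped ENNReal NNReal BigOperators

noncomputable section

/-- Euclidean `n`-space. -/
abbrev Eucl (n : ℕ) : Type := EuclideanSpace ℝ (Fin n)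

/-- `D` is a `c`-John domain (bounded or unbounded): an open connected set such that each
pair of points can be joined by a rectifiable curve, parametrized by arc length
(formalized as a `1`-Lipschitz parametrization on `[0, ℓ]`), along which
`dist(γ t, ∂D) ≥ min{t, ℓ - t}/c`. -/
def IsJohnDomain (n : ℕ) (c : ℝ) (D : Set (Eucl n)) : Prop :=
  IsOpen D ∧ IsConnected D ∧
    ∀ x₁ ∈ D, ∀ x₂ ∈ D, ∃ ℓ : ℝ, 0 ≤ ℓ ∧ ∃ γ : ℝ → Eucl n,
      γ 0 = x₁ ∧ γ ℓ = x₂ ∧ (∀ t ∈ Icc (0:ℝ) ℓ, γ t ∈ D) ∧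
      LipschitzOnWith 1 γ (Icc 0 ℓ) ∧
      ∀ t ∈ Icc (0:ℝ) ℓ, min t (ℓ - t) / c ≤ infDist (γ t) (frontier D)

/-- The ball `B(x, τ·dist(x, ∂G))`; by convention, if `∂G = ∅` (i.e. `G = ℝⁿ`)
it is all of `ℝⁿ`. -/
def tauBall (n : ℕ) (τ : ℝ) (G : Set (Eucl n)) (x : Eucl n) : Set (Eucl n) :=
  {y : Eucl n | edist x y < ENNReal.ofReal τ * EMetric.infEdist x (frontier G)}

/-- The fractional kernel `|u x - u y|^p / |x - y|^(n + δp)` as an extended real. -/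
def fracKernel (n : ℕ) (δ p : ℝ) (u : Eucl n → ℝ) (x y : Eucl n) : ℝ≥0∞ :=
  ENNReal.ofReal (|u x - u y| ^ p / dist x y ^ ((n : ℝ) + δ * p))

/-- The `p`-th power of the seminorm `|u|_{W^{δ,p}_τ(G)}`. -/
def fracEnergyTau (n : ℕ) (δ τ p : ℝ) (G : Set (Eucl n)) (u : Eucl n → ℝ) : ℝ≥0∞ :=
  ∫⁻ x in G, ∫⁻ y in tauBall n τ G x, fracKernel n δ p u x y ∂volume ∂volume

/-- The `p`-th power of the seminorm `|u|_{W^{δ,p}(G)}`. -/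
def fracEnergy (n : ℕ) (δ p : ℝ) (G : Set (Eucl n)) (u : Eucl n → ℝ) : ℝ≥0∞ :=
  ∫⁻ x in G, ∫⁻ y in G, fracKernel n δ p u x y ∂volume ∂volume

/-- The fractional `(δ,p)`-capacity of a compact set `K ⊆ G`:
`inf |u|_{W^{δ,p}(G)}^p` over `u ∈ C₀(G)` with `u ≥ 1` on `K`. -/
def fracCap (n : ℕ) (δ p : ℝ) (K G : Set (Eucl n)) : ℝ≥0∞ :=
  ⨅ (u : Eucl n → ℝ) (_ : Continuous u) (_ : HasCompactSupport u) (_ : tsupport u ⊆ G)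
    (_ : ∀ x ∈ K, 1 ≤ u x), fracEnergy n δ p G u

/-- The fractional `(δ,q,p)`-Hardy inequality holds in `G` with constant `C`. -/
def HasFracHardy (n : ℕ) (δ p q C : ℝ) (G : Set (Eucl n)) : Prop :=
  ∀ u : Eucl n → ℝ, Continuous u → HasCompactSupport u → tsupport u ⊆ G →
    (∫⁻ x in G, ENNReal.ofReal
        (|u x| ^ q / infDist x (frontier G) ^ (q * (δ + n * (1/q - 1/p)))) ∂volume)
      ≤ ENNReal.ofReal C * fracEnergy n δ p G u ^ (q / p)

/-- The closed axis-parallel cube with center `z` and half side length `r`. -/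
def cube (n : ℕ) (z : Eucl n) (r : ℝ) : Set (Eucl n) :=
  {x : Eucl n | ∀ i, |x i - z i| ≤ r}

/-- The quantity `|Q|^(-1-δ/n) ∫_Q |u - u_Q|` for the cube `Q = cube n z r`. -/
def aTerm (n : ℕ) (δ : ℝ) (u : Eucl n → ℝ) (z : Eucl n) (r : ℝ) : ℝ :=
  ((volume (cube n z r)).toReal) ^ (-(1:ℝ) - δ / n) *
    ∫ x in cube n z r, |u x - ⨍ y in cube n z r, u y ∂volume| ∂volume

/-- The seminorm `|u|_{A^{δ,p}_κ(G)}`: the supremum, over families `𝒬` of pairwise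
disjoint cubes `Q` (given by center-halfside pairs) with `κQ ⊆ G`, of the `L^p(G)`
norm of `∑_{Q ∈ 𝒬} (|Q|^(-1-δ/n) ∫_Q |u - u_Q|) χ_Q`. -/
def ASeminorm (n : ℕ) (κ δ p : ℝ) (G : Set (Eucl n)) (u : Eucl n → ℝ) : ℝ≥0∞ :=
  ⨆ (𝒬 : Set (Eucl n × ℝ)) (_ : ∀ c ∈ 𝒬, 0 < c.2 ∧ cube n c.1 (κ * c.2) ⊆ G)
    (_ : ∀ c ∈ 𝒬, ∀ c' ∈ 𝒬, c ≠ c' → cube n c.1 c.2 ∩ cube n c'.1 c'.2 = ∅),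
    (∫⁻ x in G,
        (∑' c : 𝒬, (cube n (c : Eucl n × ℝ).1 (c : Eucl n × ℝ).2).indicator
          (fun _ => ENNReal.ofReal (aTerm n δ u (c : Eucl n × ℝ).1 (c : Eucl n × ℝ).2)) x) ^ p
      ∂volume) ^ (1 / p)

/-- `Q` is a closed dyadic cube in `ℝⁿ`. -/
def IsDyadicCube (n : ℕ) (Q : Set (Eucl n)) : Prop :=
  ∃ (k : ℤ) (z : Fin n → ℤ),
    Q = {x : Eucl n | ∀ i, (z i : ℝ) * (2:ℝ) ^ k ≤ x i ∧ x i ≤ ((z i : ℝ) + 1) * (2:ℝ) ^ k}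

/-- `W` is a Whitney decomposition of the proper open set `G`: a countable family of
closed dyadic cubes with pairwise disjoint interiors whose union is `G`, with
`diam Q ≤ dist(Q, ∂G) ≤ 4 diam Q` for each cube `Q ∈ W`. -/
def IsWhitneyDecomposition (n : ℕ) (G : Set (Eucl n)) (W : Set (Set (Eucl n))) : Prop :=
  W.Countable ∧ (∀ Q ∈ W, IsDyadicCube n Q) ∧ ⋃₀ W = G ∧
    (W.Pairwise fun Q R => interior Q ∩ interior R = ∅) ∧
    ∀ Q ∈ W, (∀ x ∈ Q, Metric.diam Q ≤ infDist x (frontier G)) ∧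
      ∃ x ∈ Q, infDist x (frontier G) ≤ 4 * Metric.diam Q

/-- `lam` is an upper Assouad-type covering exponent for `E`: there is `C > 0` such
that for every `x ∈ E` and all `0 < r < R < 2 diam E`, the set `E ∩ B(x,R)` can be
covered by at most `C (R/r)^lam` balls centered in `E` of radius `r`. -/
def UpperAssouadBound (n : ℕ) (E : Set (Eucl n)) (lam : ℝ) : Prop :=
  ∃ C : ℝ, 0 < C ∧ ∀ x ∈ E, ∀ r R : ℝ, 0 < r → r < R →
    ENNReal.ofReal R < 2 * EMetric.diam E →
    ∃ F : Finset (Eucl n), ↑F ⊆ E ∧ (F.card : ℝ) ≤ C * (R / r) ^ lam ∧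
      E ∩ ball x R ⊆ ⋃ y ∈ F, ball y r

/-- The upper Assouad dimension of `E`. -/
def upperAssouadDim (n : ℕ) (E : Set (Eucl n)) : ℝ :=
  sInf {lam : ℝ | 0 ≤ lam ∧ UpperAssouadBound n E lam}

/-- `lam` is a lower Assouad-type exponent for `E`: there is `C > 0` such that for
every `x ∈ E` and all `0 < r < R < 2 diam E`, at least `C (R/r)^lam` balls centered
in `E` of radius `r` are needed to cover `E ∩ B(x,R)`. -/
def LowerAssouadBound (n : ℕ) (E : Set (Eucl n)) (lam : ℝ) : Prop :=
  ∃ C : ℝ, 0 < C ∧ ∀ x ∈ E, ∀ r R : ℝ, 0 < r → r < R →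
    ENNReal.ofReal R < 2 * EMetric.diam E →
    ∀ F : Finset (Eucl n), ↑F ⊆ E → (E ∩ ball x R ⊆ ⋃ y ∈ F, ball y r) →
      C * (R / r) ^ lam ≤ (F.card : ℝ)

/-- The lower Assouad dimension of `E`. -/
def lowerAssouadDim (n : ℕ) (E : Set (Eucl n)) : ℝ :=
  sSup {lam : ℝ | 0 ≤ lam ∧ LowerAssouadBound n E lam}

end

/-
Let `u` be admissible for `cap(K, G)`. Multiplying `u` by a cutoff `φ` that is `1` on a Whitney
cube `Q` and vanishes outside a neighbourhood of `Q` of width comparable to `diam Q`, the halo,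
gives a function admissible for `cap(K ∩ Q, G)`. The product rule bounds its energy by the energy of
`u` over the halo plus `(diam Q)^(-δp) ∫_halo |u|^p`. By Hölder, the `q/p`-th power of the second
term is at most a multiple of the Hardy integral of `u` over the halo, where the distance to `∂G` is
comparable to `diam Q`. Comparing volumes, the halos overlap boundedly; since
`∑ a_Q^(q/p) ≤ (∑ a_Q)^(q/p)`, the sum over `Q` is controlled by `|u|_W^q` and the global Hardy
integral, which is in turn bounded by `|u|_W^q`. It remains to take the infimum over `u`.
-/

section Inequalities

lemma tsum_rpow_le_rpow_tsum {ι : Type*} (a : ι → ℝ≥0∞) {s : ℝ} (hs : 1 ≤ s) :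
    ∑' i, a i ^ s ≤ (∑' i, a i) ^ s := by
  have rpow_eq (t : ℝ≥0∞) : t ^ s = t * t ^ (s - 1) := by
    conv_lhs => rw [← add_sub_cancel 1 s]
    rw [ENNReal.rpow_add_of_nonneg _ _ zero_le_one (sub_nonneg.2 hs), ENNReal.rpow_one]
  simp only [rpow_eq]
  rw [← ENNReal.tsum_mul_right]
  gcongr with i
  exact ENNReal.le_tsum i

lemma mul_add_mul_rpow_le {a b c d h i : ℝ≥0∞} {s : ℝ} (hs : 1 ≤ s) (hb : b ^ s ≤ h * i) :
    (c * (a + d * b)) ^ s ≤ c ^ s * (2 ^ (s - 1) * (1 + d ^ s * h)) * (a ^ s + i) := by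
  have hs0 : 0 ≤ s := zero_le_one.trans hs
  calc (c * (a + d * b)) ^ s ≤ c ^ s * (2 ^ (s - 1) * (a ^ s + (d * b) ^ s)) := by
        rw [ENNReal.mul_rpow_of_nonneg _ _ hs0]
        gcongr
        exact ENNReal.rpow_add_le_mul_rpow_add_rpow _ _ hs
    _ ≤ c ^ s * (2 ^ (s - 1) * ((a ^ s + i) + d ^ s * h * (a ^ s + i))) := by
        rw [ENNReal.mul_rpow_of_nonneg _ b hs0, mul_assoc (d ^ s)]
        gcongr
        · exact le_self_add
        · exact hb.trans (mul_le_mul' le_rfl le_add_self)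
    _ = c ^ s * (2 ^ (s - 1) * (1 + d ^ s * h)) * (a ^ s + i) := by ring

lemma rpow_le_rpow_abs_mul_rpow {a b M : ℝ} (ha : 0 < a) (hb : 0 < b) (hab : a ≤ M * b)
    (hba : b ≤ M * a) (t : ℝ) : a ^ t ≤ M ^ |t| * b ^ t := by
  have hM : 0 < M := pos_of_mul_pos_left (ha.trans_le hab) hb.le
  rcases le_total 0 t with ht | ht
  · rw [abs_of_nonneg ht, ← Real.mul_rpow hM.le hb.le]
    gcongr
  · rw [abs_of_nonpos ht, Real.rpow_neg hM.le, ← Real.inv_rpow hM.le,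
      ← Real.mul_rpow (inv_nonneg.2 hM.le) hb.le]
    exact Real.rpow_le_rpow_of_nonpos (by positivity) ((inv_mul_le_iff₀ hM).2 hba) ht

variable {α : Type*} [MeasurableSpace α] {μ : Measure α}

lemma rpow_lintegral_le_lintegral_rpow_mul {f : α → ℝ≥0∞} (hf : AEMeasurable f μ) {s : ℝ}
    (hs : 1 ≤ s) : (∫⁻ x, f x ∂μ) ^ s ≤ (∫⁻ x, f x ^ s ∂μ) * μ univ ^ (s - 1) := by
  have hs0 : 0 < s := one_pos.trans_le hs
  have holder := eLpNorm'_le_eLpNorm'_mul_rpow_measure_univ one_pos hs hf.aestronglyMeasurable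
  simp only [eLpNorm', enorm_eq_self, ENNReal.rpow_one, div_one] at holder
  calc (∫⁻ x, f x ∂μ) ^ s
      ≤ ((∫⁻ x, f x ^ s ∂μ) ^ (1 / s) * μ univ ^ (1 - 1 / s)) ^ s := by gcongr
    _ = (∫⁻ x, f x ^ s ∂μ) * μ univ ^ (s - 1) := by
      rw [ENNReal.mul_rpow_of_nonneg _ _ hs0.le, ← ENNReal.rpow_mul, ← ENNReal.rpow_mul,
        one_div_mul_cancel hs0.ne', ENNReal.rpow_one, sub_mul, one_mul,
        one_div_mul_cancel hs0.ne']

lemma tsum_setLIntegral_le_mul_lintegral {ι : Type*} [Countable ι] {S : ι → Set α}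
    (hS : ∀ i, MeasurableSet (S i)) {M : ℝ≥0∞}
    (hM : ∀ x, ∑' i, (S i).indicator (1 : α → ℝ≥0∞) x ≤ M) {f : α → ℝ≥0∞} (hf : Measurable f) :
    ∑' i, ∫⁻ x in S i, f x ∂μ ≤ M * ∫⁻ x, f x ∂μ := by
  rw [tsum_congr fun i => (lintegral_indicator (hS i) f).symm,
    ← lintegral_tsum fun i => (hf.indicator (hS i)).aemeasurable, ← lintegral_const_mul _ hf]
  refine lintegral_mono fun x => ?_
  calc ∑' i, (S i).indicator f x = (∑' i, (S i).indicator (1 : α → ℝ≥0∞) x) * f x := by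
        rw [← ENNReal.tsum_mul_right]
        simp only [← indicator_mul_left, Pi.one_apply, one_mul]
    _ ≤ M * f x := by gcongr; exact hM x

lemma lintegral_lintegral_add_mul_le_of_symm [SFinite μ] {w : α → ℝ≥0∞} {k : α → α → ℝ≥0∞}
    (hw : Measurable w) (hk : Measurable (Function.uncurry k)) (hsymm : ∀ x y, k x y = k y x)
    {D : ℝ≥0∞} (hD : ∀ x, ∫⁻ y, k x y ∂μ ≤ D) :
    ∫⁻ x, ∫⁻ y, (w x + w y) * k x y ∂μ ∂μ ≤ 2 * D * ∫⁻ x, w x ∂μ := by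
  have hkx (x : α) : Measurable (k x) := hk.comp measurable_prodMk_left
  have hwk : Measurable fun z : α × α => w z.1 * k z.1 z.2 := (hw.comp measurable_fst).mul hk
  have hwk' : Measurable fun z : α × α => w z.2 * k z.1 z.2 := (hw.comp measurable_snd).mul hk
  have swap : ∫⁻ x, ∫⁻ y, w y * k x y ∂μ ∂μ = ∫⁻ x, ∫⁻ y, w x * k x y ∂μ ∂μ := by
    rw [lintegral_lintegral_swap hwk'.aemeasurable]
    exact lintegral_congr fun x => lintegral_congr fun y => by rw [hsymm]
  have bound : ∫⁻ x, ∫⁻ y, w x * k x y ∂μ ∂μ ≤ D * ∫⁻ x, w x ∂μ := by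
    rw [← lintegral_const_mul _ hw]
    refine lintegral_mono fun x => ?_
    rw [lintegral_const_mul _ (hkx x), mul_comm]
    gcongr
    exact hD x
  calc ∫⁻ x, ∫⁻ y, (w x + w y) * k x y ∂μ ∂μ
      = ∫⁻ x, ∫⁻ y, w x * k x y ∂μ ∂μ + ∫⁻ x, ∫⁻ y, w y * k x y ∂μ ∂μ := by
        rw [← lintegral_add_left hwk.lintegral_prod_right']
        simp only [add_mul]
        exact lintegral_congr fun x => lintegral_add_left ((hkx x).const_mul _) _
    _ ≤ 2 * D * ∫⁻ x, w x ∂μ := by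
        rw [swap, ← two_mul, mul_assoc]
        gcongr

end Inequalities

lemma card_le_of_pairwise_disjoint_ball_subset_ball {E ι : Type*} [NormedAddCommGroup E]
    [NormedSpace ℝ E] [FiniteDimensional ℝ E] {c : ι → E} {x : E} {r R : ℝ} (hr : 0 < r)
    (hR : 0 < R) (hdisj : Pairwise (Function.onFun Disjoint fun i => ball (c i) r))
    (hsub : ∀ i, ball (c i) r ⊆ ball x R) :
    (ENat.card ι : ℝ≥0∞) ≤ ENNReal.ofReal ((R / r) ^ Module.finrank ℝ E) := by
  borelize E
  let μ : Measure E := Measure.addHaar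
  have hμ0 : μ (ball 0 r) ≠ 0 := (measure_ball_pos μ 0 hr).ne'
  refine (ENNReal.mul_le_mul_iff_left hμ0 measure_ball_lt_top.ne).1 ?_
  calc (ENat.card ι : ℝ≥0∞) * μ (ball 0 r)
      = ∑' i, μ (ball (c i) r) := by simp [μ, Measure.addHaar_ball_center]
    _ ≤ μ (⋃ i, ball (c i) r) :=
        tsum_meas_le_meas_iUnion_of_disjoint μ (fun _ => measurableSet_ball) hdisj
    _ ≤ μ (ball x (R / r * r)) := by
        rw [div_mul_cancel₀ _ hr.ne']
        exact measure_mono (iUnion_subset hsub)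
    _ = ENNReal.ofReal ((R / r) ^ Module.finrank ℝ E) * μ (ball 0 r) :=
        Measure.addHaar_ball_mul_of_pos μ x (by positivity) r

section LipschitzKernel

lemma integrableOn_min_one_rpow_mul_rpow {s p : ℝ} (hs : 0 < s) (hsp : s < p) :
    IntegrableOn (fun t : ℝ => min 1 t ^ p * t ^ (-1 - s)) (Ioi 0) := by
  rw [← Ioc_union_Ioi_eq_Ioi zero_le_one]
  refine IntegrableOn.union ?_ ?_
  · have near_zero : IntegrableOn (fun t : ℝ => t ^ (p + (-1 - s))) (Ioc 0 1) :=
      (intervalIntegrable_iff_integrableOn_Ioc_of_le zero_le_one).1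
        (intervalIntegral.intervalIntegrable_rpow' (by linarith))
    refine near_zero.congr_fun (fun t ht => ?_) measurableSet_Ioc
    simp only [min_eq_right ht.2, Real.rpow_add ht.1]
  · have near_infty : IntegrableOn (fun t : ℝ => t ^ (-1 - s)) (Ioi 1) :=
      integrableOn_Ioi_rpow_of_lt (by linarith) one_pos
    refine near_infty.congr_fun (fun t ht => ?_) measurableSet_Ioi
    simp only [min_eq_left (mem_Ioi.1 ht).le, Real.one_rpow, one_mul]

variable {E : Type*} [NormedAddCommGroup E] [NormedSpace ℝ E]

/-- The Gagliardo kernel `|φ x - φ y| ^ p / |x - y| ^ (dim E + s)` with the increment of `φ`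
replaced by its largest possible value for a `K`-Lipschitz function `φ` with values in `[0, 1]`. -/
noncomputable def lipschitzKernel (s p : ℝ) (K : ℝ≥0) (x y : E) : ℝ≥0∞ :=
  ENNReal.ofReal (min 1 (K * dist x y) ^ p / dist x y ^ (Module.finrank ℝ E + s))

lemma lipschitzKernel_comm (s p : ℝ) (K : ℝ≥0) (x y : E) :
    lipschitzKernel s p K x y = lipschitzKernel s p K y x := by
  rw [lipschitzKernel, lipschitzKernel, dist_comm]

lemma lipschitzKernel_eq_smul_sub (s p : ℝ) {K : ℝ≥0} (hK : 0 < K) (x y : E) :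
    lipschitzKernel s p K x y = ENNReal.ofReal (K ^ (Module.finrank ℝ E + s)) *
      lipschitzKernel s p 1 0 ((K : ℝ) • (x - y)) := by
  have hK' : (0 : ℝ) < K := hK
  rw [lipschitzKernel, lipschitzKernel, ← ENNReal.ofReal_mul (by positivity), dist_zero_left,
    norm_smul, Real.norm_of_nonneg hK'.le, dist_eq_norm, NNReal.coe_one, one_mul,
    Real.mul_rpow hK'.le (norm_nonneg _)]
  congr 1
  field_simp

variable [MeasurableSpace E] [BorelSpace E] [FiniteDimensional ℝ E] (μ : Measure E)
  [μ.IsAddHaarMeasure]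

lemma measurable_lipschitzKernel (s p : ℝ) (K : ℝ≥0) :
    Measurable (Function.uncurry (lipschitzKernel (E := E) s p K)) := by
  have := FiniteDimensional.proper_real E
  have hdist : Measurable fun z : E × E => dist z.1 z.2 := continuous_dist.measurable
  exact (((measurable_const.min (hdist.const_mul _)).pow_const _).div
    (hdist.pow_const _)).ennreal_ofReal

lemma lintegral_lipschitzKernel (s p : ℝ) {K : ℝ≥0} (hK : 0 < K) (x : E) :
    ∫⁻ y, lipschitzKernel s p K x y ∂μ =
      ENNReal.ofReal (K ^ s) * ∫⁻ z, lipschitzKernel s p 1 0 z ∂μ := by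
  have hK' : (0 : ℝ) < K := hK
  have hmeas : Measurable fun z : E => lipschitzKernel s p 1 0 z :=
    (measurable_lipschitzKernel s p 1).of_uncurry_left
  have dilate : ∫⁻ z, lipschitzKernel s p 1 0 ((K : ℝ) • z) ∂μ =
      ENNReal.ofReal ((K : ℝ) ^ Module.finrank ℝ E)⁻¹ * ∫⁻ z, lipschitzKernel s p 1 0 z ∂μ := by
    rw [← lintegral_map hmeas (measurable_const_smul (K : ℝ)),
      Measure.map_addHaar_smul _ hK'.ne', lintegral_smul_measure, abs_of_pos (by positivity),
      smul_eq_mul]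
  rw [lintegral_congr (lipschitzKernel_eq_smul_sub s p hK x),
    lintegral_const_mul' _ _ ENNReal.ofReal_ne_top,
    lintegral_sub_left_eq_self fun z => lipschitzKernel s p 1 0 ((K : ℝ) • z), dilate, ← mul_assoc,
    ← ENNReal.ofReal_mul (by positivity), Real.rpow_add hK', Real.rpow_natCast,
    mul_right_comm, mul_inv_cancel₀ (by positivity), one_mul]

lemma lintegral_lipschitzKernel_lt_top {s p : ℝ} (hs : 0 < s) (hsp : s < p) :
    ∫⁻ z, lipschitzKernel s p 1 (0 : E) z ∂μ < ∞ := by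
  rcases subsingleton_or_nontrivial E with _ | _
  · simp [lipschitzKernel, Subsingleton.elim _ (0 : E), hs.trans hsp |>.ne']
  have hint : Integrable
      (fun z : E => min 1 ‖z‖ ^ p / ‖z‖ ^ (Module.finrank ℝ E + s)) μ := by
    rw [integrable_fun_norm_addHaar μ
      (f := fun t => min 1 t ^ p / t ^ (Module.finrank ℝ E + s))]
    refine (integrableOn_min_one_rpow_mul_rpow hs hsp).congr_fun (fun t ht => ?_) measurableSet_Ioi
    have ht : 0 < t := ht
    have hd : ((Module.finrank ℝ E - 1 : ℕ) : ℝ) = Module.finrank ℝ E - 1 :=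
      Nat.cast_pred Module.finrank_pos
    simp only [smul_eq_mul]
    rw [← Real.rpow_natCast, hd, mul_div_left_comm, ← Real.rpow_sub ht]
    ring_nf
  simpa [lipschitzKernel] using hint.lintegral_lt_top

end LipschitzKernel

section CutoffEnergy

lemma enorm_mul_sub_mul_rpow_le {α 𝕜 : Type*} [NormedDivisionRing 𝕜] {u φ : α → 𝕜} {S : Set α}
    {p : ℝ} (hp : 0 < p) (hφ : ∀ x, ‖φ x‖ₑ ≤ 1) (hφS : ∀ x ∉ S, φ x = 0) (x y : α) :
    ‖u x * φ x - u y * φ y‖ₑ ^ p ≤ ENNReal.LpAddConst (ENNReal.ofReal p)⁻¹ *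
      (S.indicator (fun x => ‖u x - u y‖ₑ ^ p) x +
        (S.indicator (fun x => ‖u x‖ₑ ^ p) x + S.indicator (fun x => ‖u x‖ₑ ^ p) y) *
          ‖φ x - φ y‖ₑ ^ p) := by
  have add_rpow_le (a b : ℝ≥0∞) := ENNReal.rpow_add_le_mul_rpow_add_rpow' a b hp.le
  by_cases hx : x ∈ S
  · have leibniz : ‖u x * φ x - u y * φ y‖ₑ ≤ ‖u x - u y‖ₑ + ‖u x‖ₑ * ‖φ x - φ y‖ₑ := by
      calc ‖u x * φ x - u y * φ y‖ₑ = ‖(u x - u y) * φ y + u x * (φ x - φ y)‖ₑ := by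
            congr 1; noncomm_ring
        _ ≤ ‖u x - u y‖ₑ * ‖φ y‖ₑ + ‖u x‖ₑ * ‖φ x - φ y‖ₑ := by
            simpa only [enorm_mul] using enorm_add_le ((u x - u y) * φ y) (u x * (φ x - φ y))
        _ ≤ ‖u x - u y‖ₑ + ‖u x‖ₑ * ‖φ x - φ y‖ₑ := by
            gcongr; exact mul_le_of_le_one_right' (hφ y)
    simp only [indicator_of_mem hx]
    refine (ENNReal.rpow_le_rpow leibniz hp.le).trans ((add_rpow_le _ _).trans ?_)
    rw [ENNReal.mul_rpow_of_nonneg _ _ hp.le]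
    gcongr
    exact le_self_add
  · simp only [indicator_of_notMem hx, hφS x hx, mul_zero, zero_sub, zero_add, enorm_neg]
    by_cases hy : y ∈ S
    · simpa [indicator_of_mem hy, ENNReal.mul_rpow_of_nonneg _ _ hp.le,
        ENNReal.zero_rpow_of_pos hp] using add_rpow_le 0 (‖u y‖ₑ * ‖φ y‖ₑ)
    · simp [hφS y hy, hp]

variable {n : ℕ} {δ p : ℝ}

lemma fracKernel_eq_enorm_rpow_mul (hp : 0 ≤ p) (u : Eucl n → ℝ) (x y : Eucl n) :
    fracKernel n δ p u x y =
      ‖u x - u y‖ₑ ^ p * ENNReal.ofReal (dist x y ^ ((n : ℝ) + δ * p))⁻¹ := by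
  rw [fracKernel, div_eq_mul_inv, ENNReal.ofReal_mul (by positivity), Real.enorm_eq_ofReal_abs,
    ENNReal.ofReal_rpow_of_nonneg (abs_nonneg _) hp]

lemma measurable_fracKernel {u : Eucl n → ℝ} (hu : Measurable u) :
    Measurable (Function.uncurry (fracKernel n δ p u)) := by
  unfold Function.uncurry fracKernel
  fun_prop

lemma fracKernel_le_lipschitzKernel (hp : 0 ≤ p) {φ : Eucl n → ℝ} {K : ℝ≥0}
    (hφ : ∀ x, φ x ∈ Icc 0 1) (hlip : LipschitzWith K φ) (x y : Eucl n) :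
    fracKernel n δ p φ x y ≤ lipschitzKernel (δ * p) p K x y := by
  rw [fracKernel, lipschitzKernel, finrank_euclideanSpace_fin]
  gcongr
  exact le_min (abs_sub_le_of_nonneg_of_le (hφ x).1 (hφ x).2 (hφ y).1 (hφ y).2)
    (hlip.dist_le_mul x y)

lemma fracKernel_mul_le (hp : 0 < p) {u φ : Eucl n → ℝ} {S : Set (Eucl n)} {K : ℝ≥0}
    (hφ : ∀ x, φ x ∈ Icc 0 1) (hφS : ∀ x ∉ S, φ x = 0) (hlip : LipschitzWith K φ)
    (x y : Eucl n) :
    fracKernel n δ p (u * φ) x y ≤ ENNReal.LpAddConst (ENNReal.ofReal p)⁻¹ *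
      (S.indicator (fun x => fracKernel n δ p u x y) x +
        (S.indicator (fun x => ‖u x‖ₑ ^ p) x + S.indicator (fun x => ‖u x‖ₑ ^ p) y) *
          lipschitzKernel (δ * p) p K x y) := by
  have enorm_le_one (x : Eucl n) : ‖φ x‖ₑ ≤ 1 := by
    simpa [Real.enorm_of_nonneg (hφ x).1] using (hφ x).2
  set w := ENNReal.ofReal (dist x y ^ ((n : ℝ) + δ * p))⁻¹
  calc fracKernel n δ p (u * φ) x y
      = ‖u x * φ x - u y * φ y‖ₑ ^ p * w := fracKernel_eq_enorm_rpow_mul hp.le _ x y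
    _ ≤ ENNReal.LpAddConst (ENNReal.ofReal p)⁻¹ *
        (S.indicator (fun x => ‖u x - u y‖ₑ ^ p) x +
          (S.indicator (fun x => ‖u x‖ₑ ^ p) x + S.indicator (fun x => ‖u x‖ₑ ^ p) y) *
            ‖φ x - φ y‖ₑ ^ p) * w := by
      gcongr
      exact enorm_mul_sub_mul_rpow_le hp enorm_le_one hφS x y
    _ = ENNReal.LpAddConst (ENNReal.ofReal p)⁻¹ *
        (S.indicator (fun x => fracKernel n δ p u x y) x +
          (S.indicator (fun x => ‖u x‖ₑ ^ p) x + S.indicator (fun x => ‖u x‖ₑ ^ p) y) *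
            fracKernel n δ p φ x y) := by
      by_cases hx : x ∈ S <;>
        simp only [hx, indicator_of_mem, indicator_of_notMem, not_false_eq_true,
          fracKernel_eq_enorm_rpow_mul hp.le, w] <;> ring
    _ ≤ _ := by
      gcongr
      exact fracKernel_le_lipschitzKernel hp.le hφ hlip x y

lemma fracEnergy_mul_le (hp : 0 < p) (G : Set (Eucl n)) {u φ : Eucl n → ℝ} (hu : Measurable u)
    {S : Set (Eucl n)} (hS : MeasurableSet S) {K : ℝ≥0} (hK : 0 < K)
    (hφ : ∀ x, φ x ∈ Icc 0 1) (hφS : ∀ x ∉ S, φ x = 0) (hlip : LipschitzWith K φ) :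
    fracEnergy n δ p G (u * φ) ≤ ENNReal.LpAddConst (ENNReal.ofReal p)⁻¹ *
      (∫⁻ x in S, ∫⁻ y in G, fracKernel n δ p u x y ∂volume ∂volume.restrict G +
        2 * (ENNReal.ofReal (K ^ (δ * p)) *
          ∫⁻ z : Eucl n, lipschitzKernel (δ * p) p 1 0 z) *
            ∫⁻ x in S, ‖u x‖ₑ ^ p ∂volume.restrict G) := by
  set c := ENNReal.LpAddConst (ENNReal.ofReal p)⁻¹
  have hc : c ≠ ∞ := (ENNReal.LpAddConst_lt_top _).ne
  set w : Eucl n → ℝ≥0∞ := S.indicator fun x => ‖u x‖ₑ ^ p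
  have hw : Measurable w := (hu.enorm.pow_const p).indicator hS
  have hF : Measurable fun x => ∫⁻ y in G, fracKernel n δ p u x y :=
    (measurable_fracKernel hu).lintegral_prod_right'
  have hℓ := measurable_lipschitzKernel (E := Eucl n) (δ * p) p K
  have hwℓ (x : Eucl n) : Measurable fun y => (w x + w y) * lipschitzKernel (δ * p) p K x y :=
    (measurable_const.add hw).mul hℓ.of_uncurry_left
  calc fracEnergy n δ p G (u * φ)
      ≤ ∫⁻ x in G, c * (S.indicator (fun x => ∫⁻ y in G, fracKernel n δ p u x y) x +
          ∫⁻ y in G, (w x + w y) * lipschitzKernel (δ * p) p K x y) := by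
        refine lintegral_mono fun x =>
          (lintegral_mono fun y => fracKernel_mul_le hp hφ hφS hlip x y).trans_eq ?_
        rw [lintegral_const_mul' _ _ hc, lintegral_add_right _ (hwℓ x)]
        by_cases hx : x ∈ S <;> simp only [hx, indicator_of_mem, indicator_of_notMem,
          not_false_eq_true, lintegral_zero]
    _ = c * (∫⁻ x in S, ∫⁻ y in G, fracKernel n δ p u x y ∂volume ∂volume.restrict G +
          ∫⁻ x in G, ∫⁻ y in G, (w x + w y) * lipschitzKernel (δ * p) p K x y) := by
        rw [lintegral_const_mul' _ _ hc, lintegral_add_left (hF.indicator hS),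
          lintegral_indicator hS]
    _ ≤ _ := by
        rw [← lintegral_indicator hS fun x => ‖u x‖ₑ ^ p]
        gcongr
        refine lintegral_lintegral_add_mul_le_of_symm hw hℓ (lipschitzKernel_comm _ _ _)
          fun x => ?_
        rw [← lintegral_lipschitzKernel volume (δ * p) p hK x]
        exact setLIntegral_le_lintegral _ _

end CutoffEnergy

section WhitneySets

/-- `Q` is a Whitney set of `G` with constants `κ` and `Λ`: its diameter is at most `κ` times the
radius of a ball it contains, and `diam Q ≤ dist(Q, ∂G) ≤ Λ * diam Q`. Like cubes of a Whitney
decomposition, but with no prescribed shape. -/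
structure IsWhitneySet {X : Type*} [PseudoMetricSpace X] (κ Λ : ℝ) (G Q : Set X) : Prop where
  diam_pos : 0 < diam Q
  exists_ball_subset : ∃ c r, 0 < r ∧ ball c r ⊆ Q ∧ diam Q ≤ κ * r
  diam_le_infDist : ∀ x ∈ Q, diam Q ≤ infDist x (frontier G)
  exists_infDist_le : ∃ x ∈ Q, infDist x (frontier G) ≤ Λ * diam Q

/-- The neighbourhood of `Q` on which a cutoff function of `Q` is supported; for a Whitney set it
still has distance comparable to `diam Q` from the boundary. -/
def halo {X : Type*} [PseudoMetricSpace X] (Q : Set X) : Set X := thickening (diam Q / 2) Q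

namespace IsWhitneySet

section PseudoMetricSpace

variable {X : Type*} [PseudoMetricSpace X] {κ Λ : ℝ} {G Q : Set X} {x : X}

lemma isBounded (hQ : IsWhitneySet κ Λ G Q) : Bornology.IsBounded Q :=
  not_imp_comm.1 diam_eq_zero_of_unbounded hQ.diam_pos.ne'

lemma kappa_pos (hQ : IsWhitneySet κ Λ G Q) : 0 < κ := by
  obtain ⟨c, r, hr, -, hdiam⟩ := hQ.exists_ball_subset
  exact pos_of_mul_pos_left (hQ.diam_pos.trans_le hdiam) hr.le

lemma dist_lt_of_mem_halo (hQ : IsWhitneySet κ Λ G Q) (hx : x ∈ halo Q) {z : X} (hz : z ∈ Q) :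
    dist z x < 2 * diam Q := by
  obtain ⟨y, hy, hxy⟩ := mem_thickening_iff.1 hx
  calc dist z x ≤ dist z y + dist x y := dist_triangle_right z x y
    _ < 2 * diam Q := by linarith [dist_le_diam_of_mem hQ.isBounded hz hy, hQ.diam_pos]

lemma half_diam_le_infDist_of_mem_halo (hQ : IsWhitneySet κ Λ G Q) (hx : x ∈ halo Q) :
    diam Q / 2 ≤ infDist x (frontier G) := by
  obtain ⟨y, hy, hxy⟩ := mem_thickening_iff.1 hx
  have triangle : infDist y (frontier G) ≤ infDist x (frontier G) + dist y x :=
    infDist_le_infDist_add_dist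
  linarith [hQ.diam_le_infDist y hy, dist_comm x y]

lemma infDist_le_of_mem_halo (hQ : IsWhitneySet κ Λ G Q) (hx : x ∈ halo Q) :
    infDist x (frontier G) ≤ (Λ + 2) * diam Q := by
  obtain ⟨z, hz, hzΛ⟩ := hQ.exists_infDist_le
  have triangle : infDist x (frontier G) ≤ infDist z (frontier G) + dist x z :=
    infDist_le_infDist_add_dist
  linarith [hQ.dist_lt_of_mem_halo hx hz, dist_comm x z]

lemma infDist_pos_of_mem_halo (hQ : IsWhitneySet κ Λ G Q) (hx : x ∈ halo Q) :
    0 < infDist x (frontier G) :=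
  (half_pos hQ.diam_pos).trans_le (hQ.half_diam_le_infDist_of_mem_halo hx)

lemma add_two_pos_of_mem_halo (hQ : IsWhitneySet κ Λ G Q) (hx : x ∈ halo Q) : 0 < Λ + 2 :=
  pos_of_mul_pos_left ((hQ.infDist_pos_of_mem_halo hx).trans_le (hQ.infDist_le_of_mem_halo hx))
    hQ.diam_pos.le

lemma halo_subset_ball (hQ : IsWhitneySet κ Λ G Q) : ∃ c, halo Q ⊆ ball c (2 * diam Q) := by
  obtain ⟨c, hc, -⟩ := hQ.exists_infDist_le
  exact ⟨c, fun x hx => (dist_comm x c).trans_lt (hQ.dist_lt_of_mem_halo hx hc)⟩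

lemma subset_ball_of_mem_halo (hQ : IsWhitneySet κ Λ G Q) (hx : x ∈ halo Q) :
    Q ⊆ ball x (4 * infDist x (frontier G)) := fun z hz => by
  have := hQ.half_diam_le_infDist_of_mem_halo hx
  exact (hQ.dist_lt_of_mem_halo hx hz).trans_le (by linarith)

lemma exists_ball_subset_interior_of_mem_halo (hQ : IsWhitneySet κ Λ G Q) (hx : x ∈ halo Q) :
    ∃ c, ball c (infDist x (frontier G) / (κ * (Λ + 2))) ⊆ interior Q := by
  obtain ⟨c, r, -, hball, hdiam⟩ := hQ.exists_ball_subset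
  have hD := hQ.infDist_le_of_mem_halo hx
  have hΛ := hQ.add_two_pos_of_mem_halo hx
  refine ⟨c, (ball_subset_ball ?_).trans (interior_maximal hball isOpen_ball)⟩
  rw [div_le_iff₀ (mul_pos hQ.kappa_pos hΛ)]
  calc infDist x (frontier G) ≤ (Λ + 2) * (κ * r) := hD.trans (by gcongr)
    _ = r * (κ * (Λ + 2)) := by ring

end PseudoMetricSpace

variable {E : Type*} [NormedAddCommGroup E] [NormedSpace ℝ E] [FiniteDimensional ℝ E] {κ Λ : ℝ}
  {G : Set E} {W : Set (Set E)}

lemma tsum_indicator_halo_le (hW : ∀ Q ∈ W, IsWhitneySet κ Λ G Q)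
    (hdisj : W.PairwiseDisjoint interior) (x : E) :
    ∑' Q : W, (halo (Q : Set E)).indicator (1 : E → ℝ≥0∞) x ≤
      ENNReal.ofReal ((4 * κ * (Λ + 2)) ^ Module.finrank ℝ E) := by
  let T : Set W := {Q | x ∈ halo (Q : Set E)}
  have count : ∑' Q : W, (halo (Q : Set E)).indicator (1 : E → ℝ≥0∞) x = ENat.card T := by
    calc ∑' Q : W, (halo (Q : Set E)).indicator (1 : E → ℝ≥0∞) x
        = ∑' Q : W, T.indicator 1 Q := tsum_congr fun Q => by simp [indicator, T]
      _ = ENat.card T := by rw [← tsum_subtype]; exact ENNReal.tsum_set_one T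
  rw [count]
  rcases isEmpty_or_nonempty T with _ | ⟨⟨Q₀, hxQ₀⟩⟩
  · rw [(ENat.card_eq_zero_iff_empty T).2 ‹_›]
    simp
  choose c hc using fun Q : T =>
    (hW Q.1 Q.1.2).exists_ball_subset_interior_of_mem_halo Q.2
  have hD := (hW Q₀ Q₀.2).infDist_pos_of_mem_halo hxQ₀
  have hκ := (hW Q₀ Q₀.2).kappa_pos
  have hΛ := (hW Q₀ Q₀.2).add_two_pos_of_mem_halo hxQ₀
  refine (card_le_of_pairwise_disjoint_ball_subset_ball (c := c)
    (x := x) (r := infDist x (frontier G) / (κ * (Λ + 2))) (R := 4 * infDist x (frontier G))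
    (by positivity) (by positivity) ?_ ?_).trans_eq ?_
  · exact fun Q R hQR => (hdisj Q.1.2 R.1.2 fun h => hQR (Subtype.ext (Subtype.ext h))).mono
      (hc Q) (hc R)
  · exact fun Q => (hc Q).trans
      (interior_subset.trans ((hW Q.1 Q.1.2).subset_ball_of_mem_halo Q.2))
  · congr 2
    field_simp

lemma countable_of_pairwiseDisjoint_interior (hW : ∀ Q ∈ W, IsWhitneySet κ Λ G Q)
    (hdisj : W.PairwiseDisjoint interior) : W.Countable := by
  refine hdisj.countable_of_isOpen (fun Q _ => isOpen_interior) fun Q hQ => ?_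
  obtain ⟨c, r, hr, hball, -⟩ := (hW Q hQ).exists_ball_subset
  exact ⟨c, interior_maximal hball isOpen_ball (mem_ball_self hr)⟩

end IsWhitneySet

end WhitneySets

section DyadicCubes

variable {n : ℕ} {c : Eucl n} {r : ℝ} {G : Set (Eucl n)}

lemma ball_subset_cube (c : Eucl n) (r : ℝ) : ball c r ⊆ cube n c r := fun x hx i =>
  (PiLp.norm_apply_le (x - c) i).trans (mem_ball_iff_norm.1 hx).le

lemma cube_subset_closedBall (hr : 0 ≤ r) : cube n c r ⊆ closedBall c (√n * r) := fun x hx => by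
  rw [mem_closedBall, EuclideanSpace.dist_eq, ← Real.sqrt_sq hr, ← Real.sqrt_mul n.cast_nonneg]
  gcongr
  calc ∑ i, dist (x i) (c i) ^ 2 ≤ ∑ _i : Fin n, r ^ 2 := by
        gcongr with i
        exact hx i
    _ = n * r ^ 2 := by simp

lemma diam_cube_le (hr : 0 ≤ r) : diam (cube n c r) ≤ 2 * √n * r :=
  calc diam (cube n c r) ≤ diam (closedBall c (√n * r)) :=
        diam_mono (cube_subset_closedBall hr) isBounded_closedBall
    _ ≤ 2 * (√n * r) := diam_closedBall (by positivity)
    _ = 2 * √n * r := by ring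

lemma diam_cube_pos [Nontrivial (Eucl n)] (hr : 0 < r) : 0 < diam (cube n c r) :=
  calc 0 < 2 * r := by positivity
    _ = diam (ball c r) := (diam_ball_eq c hr.le).symm
    _ ≤ diam (cube n c r) := diam_mono (ball_subset_cube c r)
        (isBounded_closedBall.subset (cube_subset_closedBall hr.le))

lemma IsDyadicCube.exists_eq_cube {Q : Set (Eucl n)} (hQ : IsDyadicCube n Q) :
    ∃ c r, 0 < r ∧ Q = cube n c r := by
  obtain ⟨k, z, rfl⟩ := hQ
  refine ⟨WithLp.toLp 2 fun i => (z i + 1 / 2) * 2 ^ k, 2 ^ k / 2, by positivity, ?_⟩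
  ext x
  refine forall_congr' fun i => ?_
  rw [abs_le]
  constructor <;> rintro ⟨h₁, h₂⟩ <;> constructor <;> linarith

lemma IsWhitneyDecomposition.isWhitneySet [Nontrivial (Eucl n)] {W : Set (Set (Eucl n))}
    (hW : IsWhitneyDecomposition n G W) {Q : Set (Eucl n)} (hQ : Q ∈ W) :
    IsWhitneySet (2 * √n) 4 G Q := by
  obtain ⟨-, hdyadic, -, -, hwhitney⟩ := hW
  obtain ⟨diam_le, le_diam⟩ := hwhitney Q hQ
  obtain ⟨c, r, hr, rfl⟩ := (hdyadic Q hQ).exists_eq_cube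
  exact ⟨diam_cube_pos hr, ⟨c, r, hr, ball_subset_cube c r, diam_cube_le hr.le⟩, diam_le, le_diam⟩

lemma IsWhitneyDecomposition.pairwiseDisjoint_interior {W : Set (Set (Eucl n))}
    (hW : IsWhitneyDecomposition n G W) : W.PairwiseDisjoint interior := fun _ hQ _ hR hQR =>
  disjoint_iff_inter_eq_empty.2 (hW.2.2.2.1 hQ hR hQR)

end DyadicCubes

section CapacitySum

variable {n : ℕ} {δ p q : ℝ}

/-- The admissible functions in the definition of `fracCap n δ p K G`. -/
structure IsFracCapTest (K G : Set (Eucl n)) (u : Eucl n → ℝ) : Prop where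
  continuous : Continuous u
  hasCompactSupport : HasCompactSupport u
  tsupport_subset : tsupport u ⊆ G
  one_le : ∀ x ∈ K, 1 ≤ u x

lemma fracCap_le_fracEnergy {K G : Set (Eucl n)} {u : Eucl n → ℝ} (hu : IsFracCapTest K G u) :
    fracCap n δ p K G ≤ fracEnergy n δ p G u :=
  iInf_le_of_le u <| iInf_le_of_le hu.continuous <| iInf_le_of_le hu.hasCompactSupport <|
    iInf_le_of_le hu.tsupport_subset <| iInf_le_of_le hu.one_le le_rfl

lemma IsFracCapTest.mul_of_eq_one {K G Q : Set (Eucl n)} {u φ : Eucl n → ℝ}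
    (hu : IsFracCapTest K G u) (hφ : Continuous φ) (hφQ : ∀ x ∈ Q, φ x = 1) :
    IsFracCapTest (K ∩ Q) G (u * φ) where
  continuous := hu.continuous.mul hφ
  hasCompactSupport := hu.hasCompactSupport.mul_right
  tsupport_subset := tsupport_mul_subset_left.trans hu.tsupport_subset
  one_le x hx := by simpa [hφQ x hx.2] using hu.one_le x hx.1

lemma fracCap_inter_le (hp : 0 < p) {K G : Set (Eucl n)} {u : Eucl n → ℝ}
    (hu : IsFracCapTest K G u) (Q : Set (Eucl n)) {r : ℝ} (hr : 0 < r) :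
    fracCap n δ p (K ∩ Q) G ≤ ENNReal.LpAddConst (ENNReal.ofReal p)⁻¹ *
      (∫⁻ x in thickening r Q, ∫⁻ y in G, fracKernel n δ p u x y ∂volume ∂volume.restrict G +
        2 * (∫⁻ z : Eucl n, lipschitzKernel (δ * p) p 1 0 z) * (ENNReal.ofReal (r⁻¹ ^ (δ * p)) *
          ∫⁻ x in thickening r Q, ‖u x‖ₑ ^ p ∂volume.restrict G)) := by
  let φ (x : Eucl n) : ℝ := thickenedIndicator hr Q x
  have hφ : Continuous φ := NNReal.continuous_coe.comp (thickenedIndicator hr Q).continuous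
  have hφ_mem (x : Eucl n) : φ x ∈ Icc 0 1 :=
    ⟨NNReal.coe_nonneg _, NNReal.coe_le_one.2 (thickenedIndicator_le_one hr Q x)⟩
  have hφQ (x : Eucl n) (hx : x ∈ Q) : φ x = 1 := by
    simp only [φ, thickenedIndicator_one hr Q hx, NNReal.coe_one]
  have hφ_off (x : Eucl n) (hx : x ∉ thickening r Q) : φ x = 0 := by
    simp only [φ, thickenedIndicator_zero hr Q hx, NNReal.coe_zero]
  have hφ_lip : LipschitzWith r.toNNReal⁻¹ φ := lipschitzWith_thickenedIndicator hr Q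
  have energy_le := fracEnergy_mul_le (δ := δ) hp G hu.continuous.measurable
    isOpen_thickening.measurableSet (inv_pos.2 (Real.toNNReal_pos.2 hr)) hφ_mem hφ_off hφ_lip
  rw [NNReal.coe_inv, Real.coe_toNNReal r hr.le, mul_comm (ENNReal.ofReal _), ← mul_assoc 2,
    mul_assoc (2 * _)] at energy_le
  exact (fracCap_le_fracEnergy (hu.mul_of_eq_one hφ hφQ)).trans energy_le

/- This balance is what the exponent of the Hardy weight is made for: `r⁻¹ ^ (δ * p)` is the cost of
a cutoff at scale `r`, and `r ^ n` is the volume appearing in Hölder's inequality. -/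
lemma inv_rpow_rpow_mul_pow_rpow_eq (hp : 0 < p) (hq : 0 < q) {r : ℝ} (hr : 0 < r) :
    (r⁻¹ ^ (δ * p)) ^ (q / p) * (r ^ n) ^ (q / p - 1) =
      r ^ (-(q * (δ + n * (1 / q - 1 / p)))) := by
  rw [Real.inv_rpow hr.le, ← Real.rpow_neg hr.le, ← Real.rpow_mul hr.le, ← Real.rpow_natCast,
    ← Real.rpow_mul hr.le, ← Real.rpow_add hr]
  congr 1
  field_simp
  ring

/-- The integrand on the left-hand side of the Hardy inequality `HasFracHardy n δ p q C G`. -/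
noncomputable def hardyIntegrand (n : ℕ) (δ p q : ℝ) (G : Set (Eucl n)) (u : Eucl n → ℝ)
    (x : Eucl n) : ℝ≥0∞ :=
  ENNReal.ofReal (|u x| ^ q / infDist x (frontier G) ^ (q * (δ + n * (1 / q - 1 / p))))

lemma measurable_hardyIntegrand (G : Set (Eucl n)) {u : Eucl n → ℝ} (hu : Measurable u) :
    Measurable (hardyIntegrand n δ p q G u) :=
  ((hu.norm.pow_const q).div (measurable_infDist.pow_const _)).ennreal_ofReal

namespace IsWhitneySet

variable {κ Λ : ℝ} {G Q : Set (Eucl n)}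

lemma volume_restrict_halo_le (hQ : IsWhitneySet κ Λ G Q) :
    volume.restrict G (halo Q) ≤
      ENNReal.ofReal ((diam Q / 2) ^ n) * volume (ball (0 : Eucl n) 4) := by
  obtain ⟨c, hc⟩ := hQ.halo_subset_ball
  have hr : 0 < diam Q / 2 := half_pos hQ.diam_pos
  calc volume.restrict G (halo Q) ≤ volume (ball c (2 * diam Q)) :=
        (Measure.restrict_apply_le _ _).trans (measure_mono hc)
    _ = volume (ball c (diam Q / 2 * 4)) := by ring_nf
    _ = ENNReal.ofReal ((diam Q / 2) ^ n) * volume (ball (0 : Eucl n) 4) := by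
        rw [Measure.addHaar_ball_mul_of_pos _ _ hr, finrank_euclideanSpace_fin]

lemma half_diam_rpow_mul_le (hQ : IsWhitneySet κ Λ G Q) (t : ℝ) {x : Eucl n} (hx : x ∈ halo Q)
    (hq : 0 ≤ q) (a : ℝ) :
    ENNReal.ofReal ((diam Q / 2) ^ (-t)) * ‖a‖ₑ ^ q ≤ ENNReal.ofReal ((2 * (Λ + 2)) ^ |t|) *
      ENNReal.ofReal (|a| ^ q / infDist x (frontier G) ^ t) := by
  have hr : 0 < diam Q / 2 := half_pos hQ.diam_pos
  have hD := hQ.infDist_pos_of_mem_halo hx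
  have hrD := hQ.half_diam_le_infDist_of_mem_halo hx
  have hDr := hQ.infDist_le_of_mem_halo hx
  have hΛ := hQ.add_two_pos_of_mem_halo hx
  have one_le : 1 ≤ 2 * (Λ + 2) := by
    refine le_of_mul_le_mul_right ?_ hr
    linarith
  have rpow_le : (diam Q / 2) ^ (-t) ≤
      (2 * (Λ + 2)) ^ |t| * infDist x (frontier G) ^ (-t) := by
    rw [← abs_neg t]
    exact rpow_le_rpow_abs_mul_rpow hr hD (hrD.trans (le_mul_of_one_le_left hD.le one_le))
      (by linarith) (-t)
  rw [Real.enorm_eq_ofReal_abs, ENNReal.ofReal_rpow_of_nonneg (abs_nonneg a) hq,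
    ← ENNReal.ofReal_mul (by positivity), ← ENNReal.ofReal_mul (by positivity),
    div_eq_mul_inv (|a| ^ q), ← Real.rpow_neg hD.le, mul_left_comm, mul_comm]
  gcongr

lemma rpow_lintegral_halo_le (hQ : IsWhitneySet κ Λ G Q) (hp : 0 < p) (hpq : p ≤ q)
    {u : Eucl n → ℝ} (hu : Measurable u) :
    (ENNReal.ofReal ((diam Q / 2)⁻¹ ^ (δ * p)) *
        ∫⁻ x in halo Q, ‖u x‖ₑ ^ p ∂volume.restrict G) ^ (q / p) ≤
      volume (ball (0 : Eucl n) 4) ^ (q / p - 1) *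
        ENNReal.ofReal ((2 * (Λ + 2)) ^ |q * (δ + n * (1 / q - 1 / p))|) *
          ∫⁻ x in halo Q, hardyIntegrand n δ p q G u x ∂volume.restrict G := by
  have hq : 0 < q := hp.trans_le hpq
  have hs : 1 ≤ q / p := (one_le_div hp).2 hpq
  have hr : 0 < diam Q / 2 := half_pos hQ.diam_pos
  set r := diam Q / 2
  set t := q * (δ + n * (1 / q - 1 / p))
  set V := volume (ball (0 : Eucl n) 4)
  set I := ∫⁻ x in halo Q, ‖u x‖ₑ ^ q ∂volume.restrict G with hI
  have holder : (∫⁻ x in halo Q, ‖u x‖ₑ ^ p ∂volume.restrict G) ^ (q / p) ≤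
      I * (ENNReal.ofReal (r ^ n) * V) ^ (q / p - 1) := by
    refine (rpow_lintegral_le_lintegral_rpow_mul (hu.enorm.pow_const p).aemeasurable hs).trans ?_
    simp only [← ENNReal.rpow_mul, mul_div_cancel₀ q hp.ne']
    rw [Measure.restrict_apply_univ]
    gcongr
    exact hQ.volume_restrict_halo_le
  calc _ ≤ ENNReal.ofReal (r⁻¹ ^ (δ * p)) ^ (q / p) *
        (I * (ENNReal.ofReal (r ^ n) * V) ^ (q / p - 1)) := by
        rw [ENNReal.mul_rpow_of_nonneg _ _ (by positivity)]
        gcongr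
    _ = V ^ (q / p - 1) * (ENNReal.ofReal (r ^ (-t)) * I) := by
        rw [ENNReal.mul_rpow_of_nonneg _ _ (sub_nonneg.2 hs),
          ENNReal.ofReal_rpow_of_pos (by positivity), ENNReal.ofReal_rpow_of_pos (by positivity),
          ← inv_rpow_rpow_mul_pow_rpow_eq hp hq hr, ENNReal.ofReal_mul (by positivity)]
        ring
    _ ≤ _ := by
        rw [mul_assoc, hI, ← lintegral_const_mul' _ _ ENNReal.ofReal_ne_top,
          ← lintegral_const_mul' _ _ ENNReal.ofReal_ne_top]
        refine mul_le_mul' le_rfl ?_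
        exact setLIntegral_mono' isOpen_thickening.measurableSet fun x hx =>
          hQ.half_diam_rpow_mul_le t hx hq.le (u x)

end IsWhitneySet

lemma exists_rpow_fracCap_inter_le (hδ : δ ∈ Ioo (0 : ℝ) 1) (hp : 0 < p) (hpq : p ≤ q) (n : ℕ)
    (Λ : ℝ) : ∃ C : ℝ≥0∞, C ≠ ∞ ∧
      ∀ {κ : ℝ} {G Q : Set (Eucl n)}, IsWhitneySet κ Λ G Q →
        ∀ {K : Set (Eucl n)} {u : Eucl n → ℝ}, IsFracCapTest K G u →
          fracCap n δ p (K ∩ Q) G ^ (q / p) ≤ C *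
            ((∫⁻ x in halo Q, ∫⁻ y in G, fracKernel n δ p u x y ∂volume ∂volume.restrict G) ^
                (q / p) +
              ∫⁻ x in halo Q, hardyIntegrand n δ p q G u x ∂volume.restrict G) := by
  have hs : 1 ≤ q / p := (one_le_div hp).2 hpq
  have hs0 : 0 ≤ q / p := zero_le_one.trans hs
  set s := q / p
  set c := ENNReal.LpAddConst (ENNReal.ofReal p)⁻¹
  set J := ∫⁻ z : Eucl n, lipschitzKernel (δ * p) p 1 0 z
  have hJ : J ≠ ∞ := (lintegral_lipschitzKernel_lt_top volume (mul_pos hδ.1 hp)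
    (mul_lt_of_lt_one_left hp hδ.2)).ne
  set H := volume (ball (0 : Eucl n) 4) ^ (s - 1) *
    ENNReal.ofReal ((2 * (Λ + 2)) ^ |q * (δ + n * (1 / q - 1 / p))|)
  have hH : H ≠ ∞ := ENNReal.mul_ne_top
    (ENNReal.rpow_ne_top_of_nonneg (sub_nonneg.2 hs) measure_ball_lt_top.ne) ENNReal.ofReal_ne_top
  refine ⟨c ^ s * (2 ^ (s - 1) * (1 + (2 * J) ^ s * H)), ?_, fun {κ G Q} hQ {K u} hu => ?_⟩
  · have hc : c ≠ ∞ := (ENNReal.LpAddConst_lt_top _).ne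
    have hs1 : 0 ≤ s - 1 := sub_nonneg.2 hs
    finiteness
  exact (ENNReal.rpow_le_rpow (fracCap_inter_le hp hu Q (half_pos hQ.diam_pos)) hs0).trans
    (mul_add_mul_rpow_le hs (hQ.rpow_lintegral_halo_le hp hpq hu.continuous.measurable))

lemma exists_tsum_rpow_fracCap_inter_le (hδ : δ ∈ Ioo (0 : ℝ) 1) (hp : 0 < p) (hpq : p ≤ q)
    (C₁ κ Λ : ℝ) (n : ℕ) : ∃ C : ℝ≥0∞, C ≠ ∞ ∧
      ∀ {G : Set (Eucl n)}, HasFracHardy n δ p q C₁ G →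
        ∀ {W : Set (Set (Eucl n))}, (∀ Q ∈ W, IsWhitneySet κ Λ G Q) →
          W.PairwiseDisjoint interior →
            ∀ {K : Set (Eucl n)} {u : Eucl n → ℝ}, IsFracCapTest K G u →
              ∑' Q : W, fracCap n δ p (K ∩ (Q : Set (Eucl n))) G ^ (q / p) ≤
                C * fracEnergy n δ p G u ^ (q / p) := by
  obtain ⟨C, hC, cap_le⟩ := exists_rpow_fracCap_inter_le hδ hp hpq n Λ
  have hs : 1 ≤ q / p := (one_le_div hp).2 hpq
  have hs0 : 0 ≤ q / p := zero_le_one.trans hs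
  set s := q / p
  set M := ENNReal.ofReal ((4 * κ * (Λ + 2)) ^ n)
  refine ⟨C * (M ^ s + M * ENNReal.ofReal C₁), by finiteness,
    fun {G} hardy {W} hW hdisj {K u} hu => ?_⟩
  have : Countable W := (IsWhitneySet.countable_of_pairwiseDisjoint_interior hW hdisj).to_subtype
  have hum := hu.continuous.measurable
  have overlap {f : Eucl n → ℝ≥0∞} (hf : Measurable f) :
      ∑' Q : W, ∫⁻ x in halo (Q : Set (Eucl n)), f x ∂volume.restrict G ≤
        M * ∫⁻ x in G, f x := by
    refine tsum_setLIntegral_le_mul_lintegral (S := fun Q : W => halo (Q : Set (Eucl n)))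
      (fun _ => isOpen_thickening.measurableSet) (fun x => ?_) hf
    simpa only [finrank_euclideanSpace_fin] using IsWhitneySet.tsum_indicator_halo_le hW hdisj x
  set F := fun x => ∫⁻ y in G, fracKernel n δ p u x y
  have hF : Measurable F := (measurable_fracKernel hum).lintegral_prod_right'
  calc ∑' Q : W, fracCap n δ p (K ∩ (Q : Set (Eucl n))) G ^ s
      ≤ ∑' Q : W, C * ((∫⁻ x in halo (Q : Set (Eucl n)), F x ∂volume.restrict G) ^ s +
          ∫⁻ x in halo (Q : Set (Eucl n)), hardyIntegrand n δ p q G u x ∂volume.restrict G) :=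
        ENNReal.tsum_le_tsum fun Q => cap_le (hW Q Q.2) hu
    _ ≤ C * ((M * ∫⁻ x in G, F x) ^ s + M * ∫⁻ x in G, hardyIntegrand n δ p q G u x) := by
        rw [ENNReal.tsum_mul_left, ENNReal.tsum_add]
        gcongr
        · exact (tsum_rpow_le_rpow_tsum _ hs).trans (by gcongr; exact overlap hF)
        · exact overlap (measurable_hardyIntegrand G hum)
    _ ≤ C * ((M * fracEnergy n δ p G u) ^ s +
          M * (ENNReal.ofReal C₁ * fracEnergy n δ p G u ^ s)) := by
        gcongr
        · exact le_rfl
        · exact hardy u hu.continuous hu.hasCompactSupport hu.tsupport_subset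
    _ = C * (M ^ s + M * ENNReal.ofReal C₁) * fracEnergy n δ p G u ^ s := by
        rw [ENNReal.mul_rpow_of_nonneg _ _ hs0]
        ring

lemma le_mul_fracCap_rpow {K G : Set (Eucl n)} {L c : ℝ≥0∞} {s : ℝ} (hs : 0 < s) (hc₀ : c ≠ 0)
    (hc : c ≠ ∞) (hL : ∀ u, IsFracCapTest K G u → L ≤ c * fracEnergy n δ p G u ^ s) :
    L ≤ c * fracCap n δ p K G ^ s := by
  rw [← ENNReal.div_le_iff' hc₀ hc, ← ENNReal.rpow_inv_le_iff hs]
  refine le_iInf fun u => le_iInf fun hu => le_iInf fun hsupp => le_iInf fun hG => le_iInf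
    fun hK => ?_
  rw [ENNReal.rpow_inv_le_iff hs, ENNReal.div_le_iff' hc₀ hc]
  exact hL u ⟨hu, hsupp, hG, hK⟩

end CapacitySum

theorem statement12_general (δ p q : ℝ) (hδ : δ ∈ Ioo (0 : ℝ) 1) (hp : 0 < p) (hpq : p ≤ q)
    (C₁ κ Λ : ℝ) (n : ℕ) :
    ∃ N : ℝ, 0 < N ∧ ∀ G : Set (Eucl n), HasFracHardy n δ p q C₁ G →
      ∀ W : Set (Set (Eucl n)), (∀ Q ∈ W, IsWhitneySet κ Λ G Q) →
        W.PairwiseDisjoint interior → ∀ K : Set (Eucl n),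
          (∑' Q : W, fracCap n δ p (K ∩ (Q : Set (Eucl n))) G ^ (q / p))
            ≤ ENNReal.ofReal (N ^ (q / p)) * fracCap n δ p K G ^ (q / p) := by
  obtain ⟨C, hC, tsum_le⟩ := exists_tsum_rpow_fracCap_inter_le hδ hp hpq C₁ κ Λ n
  have hs : 0 < q / p := div_pos (hp.trans_le hpq) hp
  have hC' : 0 < C.toReal + 1 := by positivity
  refine ⟨(C.toReal + 1) ^ (q / p)⁻¹, by positivity, fun G hardy W hW hdisj K => ?_⟩
  rw [Real.rpow_inv_rpow hC'.le hs.ne']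
  refine le_mul_fracCap_rpow hs (ENNReal.ofReal_pos.2 hC').ne' ENNReal.ofReal_ne_top
    fun u hu => (tsum_le hardy hW hdisj hu).trans ?_
  gcongr
  rw [ENNReal.le_ofReal_iff_toReal_le hC hC'.le]
  exact le_add_of_nonneg_right zero_le_one

/-- If the fractional `(δ,q,p)`-Hardy inequality holds in a proper open
set `G ⊆ ℝⁿ` with constant `C₁ > 0` (`0 < δ < 1`, `0 < p ≤ q < ∞`), then there is a
constant `N = N(C₁,n,δ,q,p) > 0` such that for any Whitney decomposition `W` of `G`,
`∑_{Q ∈ W} cap_{δ,p}(K ∩ Q, G)^{q/p} ≤ N^{q/p} cap_{δ,p}(K, G)^{q/p}`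
for every compact `K ⊆ G`. -/
theorem statement12 (δ p q : ℝ) (hδ : δ ∈ Ioo (0:ℝ) 1) (hp : 0 < p) (hpq : p ≤ q)
    (C₁ : ℝ) (hC₁ : 0 < C₁) (n : ℕ) :
    ∃ N : ℝ, 0 < N ∧
      ∀ G : Set (Eucl n), IsOpen G → G.Nonempty → G ≠ univ →
        HasFracHardy n δ p q C₁ G →
        ∀ W : Set (Set (Eucl n)), IsWhitneyDecomposition n G W →
          ∀ K : Set (Eucl n), IsCompact K → K ⊆ G →
            (∑' Q : W, fracCap n δ p (K ∩ (Q : Set (Eucl n))) G ^ (q / p))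
              ≤ ENNReal.ofReal (N ^ (q / p)) * fracCap n δ p K G ^ (q / p) := by
  obtain ⟨N, hN, tsum_le⟩ := statement12_general δ p q hδ hp hpq C₁ (2 * √n) 4 n
  refine ⟨N, hN, fun G _ hne huniv hardy W hW K _ _ => ?_⟩
  have : Nontrivial (Eucl n) :=
    not_subsingleton_iff_nontrivial.1 fun _ => huniv (Subsingleton.eq_univ_of_nonempty hne)
  exact tsum_le G hardy W (fun Q => hW.isWhitneySet) hW.pairwiseDisjoint_interior K
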